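/- Let (m2, m3) ∈ S and let z be a real number with 1/r² < z < 1. Then F(−m2, −m3; 1/2; z) / F(−m2, −m3; 3/2; z) > 1 / H(z). -/

import Mathlib

/-!
Put `a = 2 m₂ + 1`, `b = 2 m₃ + 1`, `r = ab + 1`, `y = F(-m₂,-m₃;1/2;·)`, `w = F(-m₂,-m₃;3/2;·)`.
The number `1 / H(z)` is the positive root of the quadratic
`Q(z,u) = (au-1)(bu-1) - z (r-au)(r-bu)`, whose leading coefficient in `u` is positive and whose
value at `u = 0` is negative for `1/r² < z < 1`. So the claim amounts to the positivity of
`Φ = (ay-w)(by-w) - z (rw-ay)(rw-by)` on `(1/r², 1)`; it is positive on all of `[0,1)`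
(`Phi_pos`).

Since `Φ(0) > 0`, it suffices that `Φ' > 0` at every zero `z` of `Φ` in `(0,1)`. At a zero, let
`u = y/w`; then `1 < u`, `(a+b)u < ab+2` and `z = (au-1)(bu-1) / ((r-au)(r-bu))`.

* For `m₂ = 1`, and for `m₂ ≥ 2` with `u ≤ 2`, there is no such zero: comparing coefficients,
  `y - u w` is at least its Taylor polynomial of degree two, and that polynomial is positive at the
  above `z` (`direct_one`, `direct_two`).
* For `m₂ ≥ 2` and `u > 2`, the first order system
  `2 z w' = y - w`, `2 (1-z) y' = ab w - (a+b-1) y` expresses `Φ'` through `u`, and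
  the resulting polynomial in `u`, `ab`, `q = ab + 2 - (a+b)u` is positive (`barrier`).

The polynomial inequalities are proved by substitutions (Bernstein form, or shifts to
nonnegative variables) after which all coefficients are nonnegative.
-/

/-- The Gauss hypergeometric polynomial `F(-m, -n; 1/2; z)`. -/
noncomputable def F12 (m n : ℕ) (z : ℝ) : ℝ :=
  (m.factorial : ℝ) * (n.factorial : ℝ) *
    ∑ j ∈ Finset.range (min m n + 1),
      (4 : ℝ) ^ j * z ^ j /
        (((m - j).factorial : ℝ) * ((n - j).factorial : ℝ) * ((2 * j).factorial : ℝ))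

/-- The Gauss hypergeometric polynomial `F(-m, -n; 3/2; z)`. -/
noncomputable def F32 (m n : ℕ) (z : ℝ) : ℝ :=
  (m.factorial : ℝ) * (n.factorial : ℝ) *
    ∑ j ∈ Finset.range (min m n + 1),
      (4 : ℝ) ^ j * z ^ j /
        (((m - j).factorial : ℝ) * ((n - j).factorial : ℝ) * ((2 * j + 1).factorial : ℝ))

/-! ### The two polynomials and their differential system -/

/-- The coefficient of `z ^ j` in `F(-m,-n;3/2;z)`; that of `F(-m,-n;1/2;z)` is `2 j + 1` times it.
The falling factorials make it vanish for `j > min m n`. -/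
noncomputable def cf (m n j : ℕ) : ℝ :=
  (m.descFactorial j : ℝ) * (n.descFactorial j : ℝ) * 4 ^ j / ((2 * j + 1).factorial : ℝ)

/-- `F(-m,-n;3/2;z)` for `m ≤ n`, padded with two vanishing terms so that the terms of degree
at most two can always be split off. -/
noncomputable def Wp (m n : ℕ) (z : ℝ) : ℝ := ∑ j ∈ Finset.range (m + 3), cf m n j * z ^ j

/-- `F(-m,-n;1/2;z)` for `m ≤ n`, padded like `Wp`. -/
noncomputable def Yp (m n : ℕ) (z : ℝ) : ℝ :=
  ∑ j ∈ Finset.range (m + 3), (2 * (j : ℝ) + 1) * cf m n j * z ^ j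

/-- The derivative of `Wp`. -/
noncomputable def Wd (m n : ℕ) (z : ℝ) : ℝ :=
  ∑ j ∈ Finset.range (m + 3), cf m n j * (j * z ^ (j - 1))

/-- The derivative of `Yp`. -/
noncomputable def Yd (m n : ℕ) (z : ℝ) : ℝ :=
  ∑ j ∈ Finset.range (m + 3), (2 * (j : ℝ) + 1) * cf m n j * (j * z ^ (j - 1))

lemma cf_nonneg (m n j : ℕ) : 0 ≤ cf m n j := by unfold cf; positivity

lemma cf_eq_zero {m j : ℕ} (n : ℕ) (h : m < j) : cf m n j = 0 := by
  simp [cf, Nat.descFactorial_eq_zero_iff_lt.2 h]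

lemma cast_descFactorial_succ (m j : ℕ) :
    (m.descFactorial (j + 1) : ℝ) = ((m : ℝ) - j) * m.descFactorial j := by
  rw [Nat.descFactorial_succ]
  rcases le_or_gt j m with h | h
  · push_cast [Nat.cast_sub h]; ring
  · simp [Nat.descFactorial_eq_zero_iff_lt.2 h]

lemma cf_succ (m n j : ℕ) :
    (2 * (j : ℝ) + 2) * (2 * j + 3) * cf m n (j + 1) = 4 * (m - j) * (n - j) * cf m n j := by
  unfold cf
  rw [cast_descFactorial_succ, cast_descFactorial_succ,
    show 2 * (j + 1) + 1 = (2 * j + 1) + 1 + 1 by ring, Nat.factorial_succ, Nat.factorial_succ]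
  push_cast
  field_simp
  ring

lemma cf_zero (m n : ℕ) : cf m n 0 = 1 := by simp [cf]

lemma cf_one (m n : ℕ) : 3 * cf m n 1 = 2 * m * n := by
  have := cf_succ m n 0
  rw [cf_zero] at this
  push_cast at this
  norm_num at this
  linarith

lemma cf_two (m n : ℕ) : 15 * cf m n 2 = 2 * m * n * (m - 1) * (n - 1) := by
  have h := cf_succ m n 1
  have h1 := cf_one m n
  push_cast at h
  norm_num at h
  linear_combination (3 / 4) * h + ((m : ℝ) - 1) * (n - 1) * h1

lemma factorial_eq_descFactorial {m j : ℕ} (h : j ≤ m) :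
    (m.factorial : ℝ) = (m - j).factorial * m.descFactorial j := by
  exact_mod_cast (Nat.factorial_mul_descFactorial h).symm

lemma F32_eq {m n : ℕ} (h : m ≤ n) (z : ℝ) : F32 m n z = Wp m n z := by
  unfold F32 Wp
  rw [min_eq_left h, Finset.sum_range_succ _ (m + 2), Finset.sum_range_succ _ (m + 1),
    cf_eq_zero n (show m < m + 1 by omega), cf_eq_zero n (show m < m + 2 by omega),
    Finset.mul_sum]
  simp only [zero_mul, add_zero]
  refine Finset.sum_congr rfl fun j hj => ?_
  have hj : j ≤ m := by simpa [Nat.lt_succ_iff] using hj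
  rw [factorial_eq_descFactorial hj, factorial_eq_descFactorial (hj.trans h)]
  unfold cf
  field_simp

lemma F12_eq {m n : ℕ} (h : m ≤ n) (z : ℝ) : F12 m n z = Yp m n z := by
  unfold F12 Yp
  rw [min_eq_left h, Finset.sum_range_succ _ (m + 2), Finset.sum_range_succ _ (m + 1),
    cf_eq_zero n (show m < m + 1 by omega), cf_eq_zero n (show m < m + 2 by omega),
    Finset.mul_sum]
  simp only [zero_mul, mul_zero, add_zero]
  refine Finset.sum_congr rfl fun j hj => ?_
  have hj : j ≤ m := by simpa [Nat.lt_succ_iff] using hj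
  rw [factorial_eq_descFactorial hj, factorial_eq_descFactorial (hj.trans h)]
  unfold cf
  rw [Nat.factorial_succ (2 * j)]
  push_cast
  field_simp

lemma hasDerivAt_Wp (m n : ℕ) (z : ℝ) : HasDerivAt (Wp m n) (Wd m n z) z := by
  unfold Wp Wd
  exact HasDerivAt.fun_sum fun j _ => (hasDerivAt_pow j z).const_mul _

lemma hasDerivAt_Yp (m n : ℕ) (z : ℝ) : HasDerivAt (Yp m n) (Yd m n z) z := by
  unfold Yp Yd
  exact HasDerivAt.fun_sum fun j _ => (hasDerivAt_pow j z).const_mul _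

lemma ode_W (m n : ℕ) (z : ℝ) : 2 * z * Wd m n z = Yp m n z - Wp m n z := by
  unfold Wd Yp Wp
  rw [Finset.mul_sum, ← Finset.sum_sub_distrib]
  refine Finset.sum_congr rfl fun j _ => ?_
  rcases j with _ | j
  · simp
  · simp only [Nat.add_sub_cancel]; push_cast; ring

/-- The differential equation for `y`, up to a remainder, for the partial sums. -/
lemma ode_Y_partial (m n K : ℕ) (z : ℝ) :
    2 * (1 - z) *
        ∑ j ∈ Finset.range (K + 1), (2 * (j : ℝ) + 1) * cf m n j * (j * z ^ (j - 1)) +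
      (2 * m + 2 * n + 1) * ∑ j ∈ Finset.range (K + 1), (2 * (j : ℝ) + 1) * cf m n j * z ^ j -
      (2 * m + 1) * (2 * n + 1) * ∑ j ∈ Finset.range (K + 1), cf m n j * z ^ j =
    -(4 * (m - K) * (n - K) * cf m n K * z ^ K) := by
  induction K with
  | zero => simp [cf_zero]; ring
  | succ K ih =>
    have h := cf_succ m n K
    rw [Finset.sum_range_succ _ (K + 1), Finset.sum_range_succ _ (K + 1),
      Finset.sum_range_succ _ (K + 1)]
    simp only [Nat.add_sub_cancel]
    push_cast
    linear_combination ih + z ^ K * h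

lemma ode_Y (m n : ℕ) (z : ℝ) :
    2 * (1 - z) * Yd m n z =
      (2 * m + 1) * (2 * n + 1) * Wp m n z - (2 * m + 2 * n + 1) * Yp m n z := by
  have h := ode_Y_partial m n (m + 2) z
  rw [cf_eq_zero n (show m < m + 2 by omega)] at h
  unfold Yd Wp Yp
  linear_combination h

/-! ### Coefficientwise bounds -/

lemma Wp_pos (m n : ℕ) {z : ℝ} (hz : 0 ≤ z) : 0 < Wp m n z := by
  unfold Wp
  refine Finset.sum_pos' (fun j _ => mul_nonneg (cf_nonneg m n j) (by positivity))
    ⟨0, by simp, by simp [cf_zero]⟩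

lemma Wp_lt_Yp {m n : ℕ} (hm : 1 ≤ m) (hn : 1 ≤ n) {z : ℝ} (hz : 0 < z) :
    Wp m n z < Yp m n z := by
  have h1 : 0 < cf m n 1 := by
    have := cf_one m n
    have hm' : (0 : ℝ) < m := by exact_mod_cast hm
    have hn' : (0 : ℝ) < n := by exact_mod_cast hn
    have : 0 < (m : ℝ) * n := by positivity
    linarith
  unfold Wp Yp
  refine Finset.sum_lt_sum (fun j _ => ?_) ⟨1, by simp, ?_⟩
  · have := cf_nonneg m n j
    have h2 : 0 ≤ (j : ℝ) * (cf m n j * z ^ j) := by positivity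
    linarith
  · have : 0 < cf m n 1 * z := by positivity
    push_cast
    linarith

lemma Yp_le (m n : ℕ) {z : ℝ} (hz : 0 ≤ z) : Yp m n z ≤ (2 * m + 1) * Wp m n z := by
  unfold Wp Yp
  rw [Finset.mul_sum]
  refine Finset.sum_le_sum fun j _ => ?_
  rcases le_or_gt j m with h | h
  · have h' : (j : ℝ) ≤ m := by exact_mod_cast h
    have := mul_nonneg (cf_nonneg m n j) (pow_nonneg hz j)
    nlinarith
  · simp [cf_eq_zero n h]

/-- For `u ≤ 7` the coefficients `(2j+1-u) cf j` of `y - u w` are nonnegative from degree three on,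
so `y - u w` is at least its Taylor polynomial of degree two. -/
lemma taylor_le (m n : ℕ) {z u : ℝ} (hz : 0 ≤ z) (hu : u ≤ 7) :
    (1 - u) + (3 - u) * cf m n 1 * z + (5 - u) * cf m n 2 * z ^ 2 ≤
      Yp m n z - u * Wp m n z := by
  unfold Wp Yp
  rw [Finset.mul_sum, ← Finset.sum_sub_distrib, add_comm m 3, Finset.sum_range_add]
  have h : 0 ≤ ∑ x ∈ Finset.range m, ((2 * ((3 + x : ℕ) : ℝ) + 1) * cf m n (3 + x) * z ^ (3 + x) -
      u * (cf m n (3 + x) * z ^ (3 + x))) := by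
    refine Finset.sum_nonneg fun j _ => ?_
    have := mul_nonneg (cf_nonneg m n (3 + j)) (pow_nonneg hz (3 + j))
    have hj : (0 : ℝ) ≤ j := j.cast_nonneg
    push_cast
    nlinarith
  simp only [Finset.sum_range_succ, Finset.sum_range_zero, cf_zero]
  push_cast at h ⊢
  linarith

/-! ### Polynomial inequalities -/

/-- For `a = 3`, with `u` in Bernstein form on the lower half of `(1, (3b+2)/(b+3))`. -/
lemma bern_one_low {β x y : ℝ} (hβ : 0 ≤ β) (hx : 0 < x) (hy : 0 ≤ y) :
    0 < (β + 10) * (3 * (2 * (β + 14) * (x + y)) - (2 * (β + 14) * y + (4 * β + 49) * x)) *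
      (3 * (2 * (β + 14) * y + (4 * β + 49) * x) - 2 * (β + 14) * (x + y)) *
      ((β + 11) * (2 * (β + 14) * y + (4 * β + 49) * x) - 2 * (β + 14) * (x + y)) -
      3 * ((2 * (β + 14) * y + (4 * β + 49) * x) - 2 * (β + 14) * (x + y)) *
      ((3 * β + 34) * (2 * (β + 14) * (x + y)) - 3 * (2 * (β + 14) * y + (4 * β + 49) * x)) *
      ((3 * β + 34) * (2 * (β + 14) * (x + y)) -
        (β + 11) * (2 * (β + 14) * y + (4 * β + 49) * x)) := by
  ring_nf
  positivity

/-- For `a = 3`, with `u` in Bernstein form on the upper half of `(1, (3b+2)/(b+3))`. -/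
lemma bern_one_high {β x y : ℝ} (hβ : 0 ≤ β) (hx : 0 ≤ x) (hy : 0 < y) :
    0 < (β + 10) * (3 * (2 * (β + 14) * (x + y)) - ((4 * β + 49) * y + (6 * β + 70) * x)) *
      (3 * ((4 * β + 49) * y + (6 * β + 70) * x) - 2 * (β + 14) * (x + y)) *
      ((β + 11) * ((4 * β + 49) * y + (6 * β + 70) * x) - 2 * (β + 14) * (x + y)) -
      3 * (((4 * β + 49) * y + (6 * β + 70) * x) - 2 * (β + 14) * (x + y)) *
      ((3 * β + 34) * (2 * (β + 14) * (x + y)) - 3 * ((4 * β + 49) * y + (6 * β + 70) * x)) *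
      ((3 * β + 34) * (2 * (β + 14) * (x + y)) -
        (β + 11) * ((4 * β + 49) * y + (6 * β + 70) * x)) := by
  ring_nf
  positivity

/-- The first order Taylor bound beats `u` for `m₂ = 1` (denominators cleared). -/
lemma poly_one {b u : ℝ} (hb : 11 ≤ b) (hu : 1 < u) (hu1 : (b + 3) * u < 3 * b + 2) :
    0 < (b - 1) * (3 - u) * (3 * u - 1) * (b * u - 1) -
      3 * (u - 1) * (3 * b + 1 - 3 * u) * (3 * b + 1 - b * u) := by
  have hc : 0 < (2 * (b + 3) * (2 * b - 1)) ^ 3 := by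
    have : 0 < 2 * b - 1 := by linarith
    have : 0 < b + 3 := by linarith
    positivity
  refine pos_of_mul_pos_right ?_ hc.le
  rcases le_total (2 * (b + 3) * u) (4 * b + 5) with h | h
  · have := bern_one_low (β := b - 11) (x := (u - 1) * (2 * (b + 3)))
      (y := 4 * b + 5 - 2 * (b + 3) * u) (by linarith) (by nlinarith) (by linarith)
    refine this.trans_eq ?_
    ring
  · have := bern_one_high (β := b - 11) (x := 2 * (b + 3) * u - (4 * b + 5))
      (y := 2 * (3 * b + 2) - 2 * (b + 3) * u) (by linarith) (by linarith) (by linarith)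
    refine this.trans_eq ?_
    ring

/-- The second order Taylor bound beats `u` for `m₂ ≥ 2` and `1 < u ≤ 2` (denominators cleared),
with `a = 5 + α`, `b = 7 + β`, `u = (y + 2x)/(x + y)`. -/
lemma bern_two {α β x y : ℝ} (hα : 0 ≤ α) (hβ : 0 ≤ β) (hx : 0 < x) (hy : 0 ≤ y) :
    0 < (4 + α) * (6 + β) * (2 + α) * (4 + β) *
        (((5 + α) * (y + 2 * x) - (x + y)) * ((7 + β) * (y + 2 * x) - (x + y))) ^ 2 *
          (5 * (x + y) - (y + 2 * x)) +
      20 * ((4 + α) * (6 + β)) *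
        (((5 + α) * (y + 2 * x) - (x + y)) * ((7 + β) * (y + 2 * x) - (x + y))) *
        ((((5 + α) * (7 + β) + 1) * (x + y) - (5 + α) * (y + 2 * x)) *
          (((5 + α) * (7 + β) + 1) * (x + y) - (7 + β) * (y + 2 * x))) *
          (3 * (x + y) - (y + 2 * x)) -
      120 * ((y + 2 * x) - (x + y)) *
        ((((5 + α) * (7 + β) + 1) * (x + y) - (5 + α) * (y + 2 * x)) *
          (((5 + α) * (7 + β) + 1) * (x + y) - (7 + β) * (y + 2 * x))) ^ 2 := by
  ring_nf
  positivity

/-- The form of the barrier inequality with `√(ab) = 2u - 1 + h`, `u = 2 + v` and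
`d = (a + b - 2√(ab)) u`, in which all coefficients are nonnegative. -/
lemma barrier_shift {v h d : ℝ} (hv : 0 ≤ v) (hh : 0 ≤ h) (hd : 0 ≤ d) (u g k e q : ℝ)
    (hu : u = 2 + v) (hg : g = 2 * u - 1 + h) (hk : k = g ^ 2 + 1)
    (he : e = g ^ 2 * u ^ 2 - k) (hq : q = g ^ 2 + 2 - 2 * g * u - d) :
    0 < (q + (u - 1) * k - 2) * ((k + 1) * e + q * (e + 2 * k)) -
      2 * u * (e + q) * (e + k * q) := by
  subst hq he hk hg hu
  ring_nf
  positivity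

/-- The polynomial governing the sign of `Φ'` at a zero of `Φ`, for `u > 2`;
`p = ab`, `s = a + b`. -/
lemma barrier {p s u : ℝ} (hp : 4 ≤ p) (hs : 0 ≤ s) (hsp : 4 * p ≤ s ^ 2) (hu : 2 ≤ u)
    (hq : 0 < p + 2 - s * u) :
    0 < ((p + 2 - s * u) ^ 2 + (p + 2 - s * u) * ((u - 1) * (p + 1) - 2) +
          (u - 2) * (p * u ^ 2 - (p + 1))) *
        ((p + 2) * (p * u ^ 2 - (p + 1)) +
          (p + 2 - s * u) * (p * u ^ 2 - (p + 1) + 2 * (p + 1))) -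
      2 * u * (p + 2 - s * u) * (p * u ^ 2 - (p + 1) + (p + 2 - s * u)) *
        (p * u ^ 2 - (p + 1) + (p + 1) * (p + 2 - s * u)) := by
  obtain ⟨g, hg0, hg⟩ : ∃ g : ℝ, 0 ≤ g ∧ p = g ^ 2 :=
    ⟨√p, Real.sqrt_nonneg p, (Real.sq_sqrt (by linarith)).symm⟩
  have hg2 : 2 ≤ g := by nlinarith
  have hsg : 2 * g ≤ s := by
    apply le_of_sq_le_sq _ hs
    nlinarith
  -- `2 g u ≤ s u < g² + 2` and `g ≥ 2` give `2 u ≤ g + 1`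
  have hgu : 2 * u - 1 ≤ g := by
    have h1 : 2 * g * u ≤ s * u := mul_le_mul_of_nonneg_right hsg (by linarith)
    by_contra! hlt
    nlinarith
  have hB := barrier_shift (v := u - 2) (h := g - (2 * u - 1)) (d := (s - 2 * g) * u)
    (by linarith) (by linarith) (mul_nonneg (by linarith) (by linarith)) u g (p + 1)
    (p * u ^ 2 - (p + 1)) (p + 2 - s * u) (by ring) (by ring) (by rw [hg]) (by rw [hg])
    (by rw [hg]; ring)
  have he : 0 < p * u ^ 2 - (p + 1) := by
    have : 4 ≤ u ^ 2 := by nlinarith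
    nlinarith
  generalize p * u ^ 2 - (p + 1) = e at *
  generalize p + 2 - s * u = q at *
  have h1 := mul_pos hq hB
  have h2 : 0 ≤ (u - 2) * e * ((p + 2) * e + q * (e + 2 * (p + 1))) := by
    have : 0 ≤ u - 2 := by linarith
    have : 0 ≤ p := by linarith
    positivity
  linarith

/-! ### The sign of `Φ` -/

/-- For `m = 1` the Taylor bound for `y - u w` is positive where the quadratic `Q(z,u)` vanishes,
so that `y = u w` is impossible there. -/
lemma direct_one {n : ℕ} (hn : 5 ≤ n) {z u : ℝ} (hu1 : 1 < u)
    (hq : 0 < (2 * (1 : ℝ) + 1) * (2 * n + 1) + 2 - ((2 * (1 : ℝ) + 1) + (2 * n + 1)) * u)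
    (hD : 0 < ((2 * (1 : ℝ) + 1) * (2 * n + 1) + 1 - (2 * (1 : ℝ) + 1) * u) *
      ((2 * (1 : ℝ) + 1) * (2 * n + 1) + 1 - (2 * n + 1) * u))
    (hz : z = ((2 * (1 : ℝ) + 1) * u - 1) * ((2 * n + 1) * u - 1) /
      (((2 * (1 : ℝ) + 1) * (2 * n + 1) + 1 - (2 * (1 : ℝ) + 1) * u) *
      ((2 * (1 : ℝ) + 1) * (2 * n + 1) + 1 - (2 * n + 1) * u))) :
    0 < (1 - u) + (3 - u) * cf 1 n 1 * z + (5 - u) * cf 1 n 2 * z ^ 2 := by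
  have hn' : (5 : ℝ) ≤ n := by exact_mod_cast hn
  have h1 : cf 1 n 1 = 2 / 3 * n := by
    have := cf_one 1 n
    push_cast at this
    linarith
  rw [h1, cf_eq_zero n (show 1 < 2 by norm_num), hz]
  have hP := poly_one (b := 2 * n + 1) (u := u) (by linarith) hu1 (by linarith)
  have : (1 - u) + (3 - u) * (2 / 3 * (n : ℝ)) *
      (((2 * (1 : ℝ) + 1) * u - 1) * ((2 * n + 1) * u - 1) /
      (((2 * (1 : ℝ) + 1) * (2 * n + 1) + 1 - (2 * (1 : ℝ) + 1) * u) *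
      ((2 * (1 : ℝ) + 1) * (2 * n + 1) + 1 - (2 * n + 1) * u))) =
      ((2 * (n : ℝ) + 1 - 1) * (3 - u) * (3 * u - 1) * ((2 * n + 1) * u - 1) -
      3 * (u - 1) * (3 * (2 * n + 1) + 1 - 3 * u) * (3 * (2 * n + 1) + 1 - (2 * n + 1) * u)) /
      (3 * (((2 * (1 : ℝ) + 1) * (2 * n + 1) + 1 - (2 * (1 : ℝ) + 1) * u) *
      ((2 * (1 : ℝ) + 1) * (2 * n + 1) + 1 - (2 * n + 1) * u))) := by
    rw [eq_div_iff (by positivity)]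
    generalize hDD : ((2 * (1 : ℝ) + 1) * (2 * n + 1) + 1 - (2 * (1 : ℝ) + 1) * u) *
      ((2 * (1 : ℝ) + 1) * (2 * n + 1) + 1 - (2 * n + 1) * u) = DD at *
    field_simp
    rw [← hDD]
    ring
  have h2 := div_pos hP (show 0 < 3 * (((2 * (1 : ℝ) + 1) * (2 * n + 1) + 1 -
    (2 * (1 : ℝ) + 1) * u) * ((2 * (1 : ℝ) + 1) * (2 * n + 1) + 1 - (2 * n + 1) * u)) by positivity)
  rw [← this] at h2
  linarith

/-- For `m ≥ 2` and `1 < u ≤ 2` the Taylor bound for `y - u w` is positive where the quadratic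
`Q(z,u)` vanishes, so that `y = u w` is impossible there. -/
lemma direct_two {m n : ℕ} (hm : 2 ≤ m) (hn : 3 ≤ n) {z u a b : ℝ} (ha : a = 2 * m + 1)
    (hb : b = 2 * n + 1) (hu1 : 1 < u) (hu2 : u ≤ 2)
    (hD : 0 < (a * b + 1 - a * u) * (a * b + 1 - b * u))
    (hz : z = (a * u - 1) * (b * u - 1) / ((a * b + 1 - a * u) * (a * b + 1 - b * u))) :
    0 < (1 - u) + (3 - u) * cf m n 1 * z + (5 - u) * cf m n 2 * z ^ 2 := by
  have hm' : (2 : ℝ) ≤ m := by exact_mod_cast hm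
  have hn' : (3 : ℝ) ≤ n := by exact_mod_cast hn
  have hP := bern_two (α := a - 5) (β := b - 7) (x := u - 1) (y := 2 - u) (by linarith)
    (by linarith) (by linarith) (by linarith)
  have h1 : cf m n 1 = (a - 1) * (b - 1) / 6 := by
    have := cf_one m n
    rw [ha, hb]
    linarith
  have h2 : cf m n 2 = (a - 1) * (b - 1) * (a - 3) * (b - 3) / 120 := by
    have := cf_two m n
    rw [ha, hb]
    linarith
  rw [h1, h2]
  generalize hDD : (a * b + 1 - a * u) * (a * b + 1 - b * u) = DD at *
  have hzD : z * DD = (a * u - 1) * (b * u - 1) := by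
    rw [hz]; field_simp
  have hpos : 0 < 120 * DD ^ 2 := by positivity
  refine pos_of_mul_pos_right ?_ hpos.le
  have key : 120 * DD ^ 2 * ((1 - u) + (3 - u) * ((a - 1) * (b - 1) / 6) * z +
      (5 - u) * ((a - 1) * (b - 1) * (a - 3) * (b - 3) / 120) * z ^ 2) =
      (a - 1) * (b - 1) * (a - 3) * (b - 3) * (z * DD) ^ 2 * (5 - u) +
      20 * ((a - 1) * (b - 1)) * (z * DD) * DD * (3 - u) - 120 * (u - 1) * DD ^ 2 := by ring
  rw [key, hzD, ← hDD]
  refine hP.trans_eq ?_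
  ring

/-- `Φ = (ay-w)(by-w) - z (rw-ay)(rw-by)`, the value at `u = y/w` of the quadratic with root
`1 / H(z)`, cleared of denominators. -/
noncomputable def Phi (m n : ℕ) (z : ℝ) : ℝ :=
  ((2 * m + 1) * Yp m n z - Wp m n z) * ((2 * n + 1) * Yp m n z - Wp m n z) -
    z * ((((2 * m + 1) * (2 * n + 1) + 1) * Wp m n z - (2 * m + 1) * Yp m n z) *
      (((2 * m + 1) * (2 * n + 1) + 1) * Wp m n z - (2 * n + 1) * Yp m n z))

/-- The derivative of `Phi`. -/
noncomputable def Phid (m n : ℕ) (z : ℝ) : ℝ :=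
  (((2 * m + 1) * Yd m n z - Wd m n z) * ((2 * n + 1) * Yp m n z - Wp m n z) +
    ((2 * m + 1) * Yp m n z - Wp m n z) * ((2 * n + 1) * Yd m n z - Wd m n z)) -
    (1 * ((((2 * m + 1) * (2 * n + 1) + 1) * Wp m n z - (2 * m + 1) * Yp m n z) *
      (((2 * m + 1) * (2 * n + 1) + 1) * Wp m n z - (2 * n + 1) * Yp m n z)) +
    z * ((((2 * m + 1) * (2 * n + 1) + 1) * Wd m n z - (2 * m + 1) * Yd m n z) *
      (((2 * m + 1) * (2 * n + 1) + 1) * Wp m n z - (2 * n + 1) * Yp m n z) +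
      (((2 * m + 1) * (2 * n + 1) + 1) * Wp m n z - (2 * m + 1) * Yp m n z) *
      (((2 * m + 1) * (2 * n + 1) + 1) * Wd m n z - (2 * n + 1) * Yd m n z)))

lemma hasDerivAt_Phi (m n : ℕ) (z : ℝ) : HasDerivAt (Phi m n) (Phid m n z) z := by
  have hy := hasDerivAt_Yp m n z
  have hw := hasDerivAt_Wp m n z
  exact (((hy.const_mul _).sub hw).mul ((hy.const_mul _).sub hw)).sub
    ((hasDerivAt_id z).mul (((hw.const_mul _).sub (hy.const_mul _)).mul
      ((hw.const_mul _).sub (hy.const_mul _))))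

/-- The sign of `Φ'` at a zero of `Φ` with `y = u w`, `u > 2`, where `y'` and `w'` are given by the
differential system. -/
lemma deriv_pos_of_barrier {a b u z w yd wd : ℝ} (ha : 2 ≤ a) (hb : 2 ≤ b) (hu : 2 ≤ u)
    (hz0 : 0 < z) (hz1 : z < 1) (hw : 0 < w)
    (hD : 0 < (a * b + 1 - a * u) * (a * b + 1 - b * u))
    (hz : z = (a * u - 1) * (b * u - 1) / ((a * b + 1 - a * u) * (a * b + 1 - b * u)))
    (hq : 0 < a * b + 2 - (a + b) * u)
    (hwd : 2 * z * wd = u * w - w) (hyd : 2 * (1 - z) * yd = a * b * w - (a + b - 1) * (u * w)) :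
    0 < ((a * yd - wd) * (b * (u * w) - w) + (a * (u * w) - w) * (b * yd - wd)) -
      (1 * (((a * b + 1) * w - a * (u * w)) * ((a * b + 1) * w - b * (u * w))) +
      z * (((a * b + 1) * wd - a * yd) * ((a * b + 1) * w - b * (u * w)) +
        ((a * b + 1) * w - a * (u * w)) * ((a * b + 1) * wd - b * yd))) := by
  have hB := barrier (p := a * b) (s := a + b) (u := u) (by nlinarith) (by linarith)
    (by nlinarith [sq_nonneg (a - b)]) hu hq
  have hab : 0 < a * b := by nlinarith
  generalize hDD : (a * b + 1 - a * u) * (a * b + 1 - b * u) = DD at *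
  have hzD : z * DD = (a * u - 1) * (b * u - 1) := by
    rw [hz]; field_simp
  have hz1' : 0 < 1 - z := by linarith
  have hc : 0 < 2 * z * (1 - z) * u * DD ^ 2 := by positivity
  refine pos_of_mul_pos_right ?_ hc.le
  have hrhs := mul_pos (mul_pos (pow_pos hw 2) hab) hB
  refine hrhs.trans_eq (Eq.symm ?_)
  -- multiplied by `2 z (1 - z)`, the derivative becomes a polynomial in `u` and `z`
  have step : 2 * z * (1 - z) * u * DD ^ 2 *
      (((a * yd - wd) * (b * (u * w) - w) + (a * (u * w) - w) * (b * yd - wd)) -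
      (1 * (((a * b + 1) * w - a * (u * w)) * ((a * b + 1) * w - b * (u * w))) +
      z * (((a * b + 1) * wd - a * yd) * ((a * b + 1) * w - b * (u * w)) +
        ((a * b + 1) * w - a * (u * w)) * ((a * b + 1) * wd - b * yd)))) =
      u * w ^ 2 * ((DD - z * DD) * (u - 1) *
        (DD * (-(b * u - 1) - (a * u - 1)) -
          z * DD * (a * b + 1) * ((a * b + 1 - b * u) + (a * b + 1 - a * u))) +
        z * DD * (a * b - (a + b - 1) * u) *
        (DD * (a * (b * u - 1) + b * (a * u - 1)) +
          z * DD * (a * (a * b + 1 - b * u) + b * (a * b + 1 - a * u))) -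
        2 * (z * DD) * (DD - z * DD) * ((a * b + 1 - a * u) * (a * b + 1 - b * u))) := by
    linear_combination (u * DD ^ 2 * w) * ((1 - z) * (-(b * u - 1) - (a * u - 1) -
      z * (a * b + 1) * ((a * b + 1 - b * u) + (a * b + 1 - a * u))) * hwd +
      z * (a * (b * u - 1) + b * (a * u - 1) +
      z * (a * (a * b + 1 - b * u) + b * (a * b + 1 - a * u))) * hyd)
  rw [step, hzD, ← hDD]
  ring

lemma Phi_pos {m n : ℕ} (hS : (m = 1 ∧ 5 ≤ n) ∨ (m = 2 ∧ 3 ≤ n) ∨ (3 ≤ m ∧ m ≤ n)) {z : ℝ}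
    (hz0 : 0 < z) (hz1 : z < 1) : 0 < Phi m n z := by
  have hm : 1 ≤ m := by omega
  have hn : 1 ≤ n := by omega
  have hmn : m ≤ n := by omega
  have hm' : (1 : ℝ) ≤ m := by exact_mod_cast hm
  have hmn' : (m : ℝ) ≤ n := by exact_mod_cast hmn
  have h0 : 0 < Phi m n 0 := by
    have hw : Wp m n 0 = 1 := by
      unfold Wp
      rw [Finset.sum_range_succ']
      simp [cf_zero]
    have hy : Yp m n 0 = 1 := by
      unfold Yp
      rw [Finset.sum_range_succ']
      simp [cf_zero]
    unfold Phi
    rw [hw, hy]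
    have : 0 < (m : ℝ) * n := by nlinarith
    linarith
  have key : ∀ x, 0 < x → x < 1 → Phi m n x = 0 → 0 < Phid m n x := by
    intro x hx0 hx1 hx
    have hw := Wp_pos m n hx0.le
    have hlt := Wp_lt_Yp hm hn hx0
    have hle := Yp_le m n hx0.le
    have hT := fun u hu => taylor_le m n (u := u) hx0.le hu
    have odeW := ode_W m n x
    have odeY := ode_Y m n x
    unfold Phi at hx
    unfold Phid
    obtain ⟨u, hu⟩ : ∃ u, Yp m n x = u * Wp m n x := ⟨Yp m n x / Wp m n x, by field_simp⟩
    rw [hu] at hx hlt hle odeW odeY ⊢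
    have hu1 : 1 < u := by
      by_contra! h
      nlinarith
    have hua : u ≤ 2 * m + 1 := le_of_mul_le_mul_right hle hw
    obtain ⟨a, ha⟩ : ∃ a : ℝ, a = 2 * m + 1 := ⟨_, rfl⟩
    obtain ⟨b, hb⟩ : ∃ b : ℝ, b = 2 * n + 1 := ⟨_, rfl⟩
    rw [← ha] at hua
    have hQ : (a * u - 1) * (b * u - 1) =
        x * ((a * b + 1 - a * u) * (a * b + 1 - b * u)) := by
      have hw2 : Wp m n x ^ 2 ≠ 0 := by positivity
      apply mul_left_cancel₀ hw2
      rw [ha, hb]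
      linear_combination hx
    have ha3 : 3 ≤ a := by linarith
    have hba : a ≤ b := by linarith
    have hNpos : 0 < (a * u - 1) * (b * u - 1) :=
      mul_pos (by nlinarith) (by nlinarith)
    have hD : 0 < (a * b + 1 - a * u) * (a * b + 1 - b * u) := by
      rw [hQ] at hNpos
      exact pos_of_mul_pos_right hNpos hx0.le
    have hz : x = (a * u - 1) * (b * u - 1) / ((a * b + 1 - a * u) * (a * b + 1 - b * u)) := by
      rw [eq_div_iff hD.ne', hQ]
    -- the difference of denominator and numerator of `x` is `ab (ab + 2 - (a + b) u)`
    have hq : 0 < a * b + 2 - (a + b) * u := by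
      have hab : 0 < a * b := by nlinarith
      have h1 : 0 < a * b * (a * b + 2 - (a + b) * u) := by
        have h2 : 0 < (1 - x) * ((a * b + 1 - a * u) * (a * b + 1 - b * u)) :=
          mul_pos (by linarith) hD
        nlinarith
      exact pos_of_mul_pos_right h1 hab.le
    by_cases hm2 : m = 1
    · subst hm2
      have hn5 : 5 ≤ n := by omega
      exfalso
      have h7 : u ≤ 7 := by push_cast at ha; linarith
      have := hT u h7
      rw [hu] at this
      subst ha hb
      push_cast at hq hD hz
      have := direct_one hn5 hu1 hq hD hz
      linarith
    · have hm2' : 2 ≤ m := by omega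
      have hn3 : 3 ≤ n := by omega
      rcases le_or_gt u 2 with h | h
      · exfalso
        have := hT u (by linarith)
        rw [hu] at this
        have := direct_two hm2' hn3 ha hb hu1 h hD hz
        linarith
      · have hP := deriv_pos_of_barrier (a := a) (b := b) (yd := Yd m n x) (wd := Wd m n x)
          (by linarith) (by linarith) h.le hx0 hx1 hw hD hz hq odeW
          (by rw [odeY, ha, hb]; ring)
        rw [ha, hb] at hP
        exact hP
  have hnn : ∀ x, 0 ≤ x → x < 1 → 0 ≤ Phi m n x := by
    intro x hx0 hx1
    refine image_le_of_deriv_right_lt_deriv_boundary (f := fun _ => (0 : ℝ)) (f' := fun _ => 0)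
      (a := 0) (b := x) continuousOn_const (fun t _ => hasDerivWithinAt_const _ _ _) h0.le
      (fun t => hasDerivAt_Phi m n t) ?_ ⟨hx0, le_rfl⟩
    rintro t ⟨ht0, ht1⟩ ht
    rcases ht0.eq_or_lt with rfl | ht0
    · exact absurd ht h0.ne
    · exact key t ht0 (ht1.trans hx1) ht.symm
  refine lt_of_le_of_ne (hnn z hz0.le hz1) fun h => ?_
  -- a zero in the interior would be a local minimum, so `Φ'` would vanish there
  have hmin : IsLocalMin (Phi m n) z := by
    filter_upwards [Ioo_mem_nhds hz0 hz1] with t ht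
    rw [← h]
    exact hnn t ht.1.le ht.2
  have := hmin.hasDerivAt_eq_zero (hasDerivAt_Phi m n z)
  linarith [key z hz0 hz1 h.symm]

/-- A positive `R` at which the quadratic `C R² + 2 B R - A` is positive exceeds its positive root,
written as the inverse of `(B + √(B² + C A)) / A`. -/
lemma inv_lt_of_quadratic {A B C Δ R : ℝ} (hA : 0 < A) (hC : 0 < C) (hR : 0 < R)
    (hΔ : Δ = B ^ 2 + C * A) (hQ : 0 < C * R ^ 2 + 2 * B * R - A) :
    1 / ((B + √Δ) / A) < R := by
  have hCA : 0 < C * A := mul_pos hC hA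
  have habs : |B| < √Δ := Real.lt_sqrt_of_sq_lt (by rw [sq_abs]; linarith)
  have hden : 0 < B + √Δ := by linarith [neg_abs_le B]
  rw [one_div_div, div_lt_iff₀ hden]
  have hlt : A / R - B < √Δ := by
    refine Real.lt_sqrt_of_sq_lt ?_
    rw [hΔ]
    have : A / R * (2 * B - A / R + C * A / (A / R)) = A * (C * R ^ 2 + 2 * B * R - A) / R ^ 2 := by
      field_simp
      ring
    have h2 : 0 < A * (C * R ^ 2 + 2 * B * R - A) / R ^ 2 := by positivity
    have h3 : A / R * (C * A / (A / R)) = C * A := by field_simp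
    nlinarith
  have : A / R < √Δ + B := by linarith
  rw [div_lt_iff₀ hR] at this
  linarith

/-- **Hypergeometric function ratio inequality** (2.18): for `(m₂, m₃) ∈ S` and
`1/r² < z < 1`, `F(−m₂,−m₃;1/2;z) / F(−m₂,−m₃;3/2;z) > 1 / H(z)`. -/
theorem stmt_8 (m2 m3 : ℕ)
    (hS : (m2 = 1 ∧ 5 ≤ m3) ∨ (m2 = 2 ∧ 3 ≤ m3) ∨ (3 ≤ m2 ∧ m2 ≤ m3))
    (z : ℝ) :
    let r : ℝ := (2 * m2 + 1) * (2 * m3 + 1) + 1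
    let H : ℝ → ℝ := fun w =>
      (((m2 : ℝ) + m3 + 1) * (r * w - 1) +
        Real.sqrt ((((m3 : ℝ) - m2) * (r * w - 1)) ^ 2 +
          (2 * (m2 : ℝ) + 1) ^ 3 * (2 * (m3 : ℝ) + 1) ^ 3 * w)) / (r ^ 2 * w - 1)
    1 / r ^ 2 < z → z < 1 →
      F12 m2 m3 z / F32 m2 m3 z > 1 / H z := by
  intro r H hz hz1
  have hr : 0 < r := by positivity
  have hz0 : 0 < z := lt_trans (by positivity) hz
  have hmn : m2 ≤ m3 := by omega
  have hP := Phi_pos hS hz0 hz1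
  rw [F12_eq hmn, F32_eq hmn]
  have hw := Wp_pos m2 m3 hz0.le
  have hlt := Wp_lt_Yp (m := m2) (n := m3) (by omega) (by omega) hz0
  have hR : 0 < Yp m2 m3 z / Wp m2 m3 z := div_pos (hw.trans hlt) hw
  have hy : Yp m2 m3 z = Yp m2 m3 z / Wp m2 m3 z * Wp m2 m3 z := by field_simp
  generalize Yp m2 m3 z / Wp m2 m3 z = R at *
  unfold Phi at hP
  rw [hy] at hP
  have hA : 0 < r ^ 2 * z - 1 := by
    rw [div_lt_iff₀ (by positivity)] at hz
    linarith
  have h1z : 0 < 1 - z := by linarith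
  refine inv_lt_of_quadratic hA (C := (2 * m2 + 1) * (2 * m3 + 1) * (1 - z)) (by positivity) hR
    ?_ ?_
  · simp only [r]
    ring
  · refine pos_of_mul_pos_right ?_ (pow_pos hw 2).le
    refine hP.trans_eq ?_
    simp only [r]
    ring
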